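/- Let X be a Banach space with property (β) of Rolewicz, and let Y be a Banach space that is a uniform quotient of X (i.e., there is a surjective uniform quotient map f : X → Y). Then Y is reflexive. -/

import Mathlib

namespace UQBeta

/-- One-sided form of Helly's theorem. -/
lemma helly {Y : Type*} [NormedAddCommGroup Y] [NormedSpace ℝ Y]
    (ξ : StrongDual ℝ (StrongDual ℝ Y)) (hξ : ‖ξ‖ ≤ 1) (θ : ℝ)
    (s : Finset (StrongDual ℝ Y)) (hs : ∀ g ∈ s, θ < ξ g) :
    ∃ x : Y, ‖x‖ ≤ 1 ∧ ∀ g ∈ s, θ < g x := by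
  classical
  let T : Y →L[ℝ] (s → ℝ) := ContinuousLinearMap.pi (fun g => (g : StrongDual ℝ Y))
  let v : s → ℝ := fun g => ξ g
  have hconv : Convex ℝ (closure (T '' Metric.closedBall 0 1)) :=
    ((convex_closedBall (0 : Y) 1).linear_image T.toLinearMap).closure
  by_cases hv : v ∈ closure (T '' Metric.closedBall 0 1)
  · have hU : IsOpen (Set.pi Set.univ (fun _ : s => Set.Ioi θ)) :=
      isOpen_set_pi Set.finite_univ (fun _ _ => isOpen_Ioi)
    have hvU : v ∈ Set.pi Set.univ (fun _ : s => Set.Ioi θ) := fun g _ => hs g g.2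
    obtain ⟨w, hw, x, hx, rfl⟩ := mem_closure_iff.1 hv _ hU hvU
    refine ⟨x, by simpa using hx, fun g hg => ?_⟩
    exact hw ⟨g, hg⟩ (Set.mem_univ _)
  · exfalso
    obtain ⟨φ, u, h1, h2⟩ := geometric_hahn_banach_closed_point hconv isClosed_closure hv
    have hφ : ∀ w : s → ℝ, φ w = ∑ g, w g * φ (Pi.single g 1) := by
      intro w
      conv_lhs => rw [pi_eq_sum_univ' w]
      simp [map_sum]
    let h : StrongDual ℝ Y := ∑ g : s, φ (Pi.single g 1) • (g : StrongDual ℝ Y)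
    have hh : ∀ x, h x = φ (T x) := by
      intro x
      rw [hφ]
      simp [h, T, mul_comm]
    have hξh : ξ h = φ v := by
      rw [hφ]
      simp [h, v, map_sum, mul_comm]
    have hu : ∀ x : Y, ‖x‖ ≤ 1 → h x < u := by
      intro x hx
      rw [hh]
      exact h1 _ (subset_closure ⟨x, by simpa using hx, rfl⟩)
    have hu0 : 0 ≤ u := by
      have := hu 0 (by simp)
      simp at this
      exact this.le
    have hn : ‖h‖ ≤ u := by
      by_contra hc
      push Not at hc
      obtain ⟨x, hx, hx2⟩ := h.exists_lt_apply_of_lt_opNorm hc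
      rw [Real.norm_eq_abs] at hx2
      rcases lt_abs.1 hx2 with h3 | h3
      · exact absurd (hu x hx.le) (by linarith)
      · have := hu (-x) (by simpa using hx.le)
        rw [map_neg] at this
        linarith
    have h4 : ξ h ≤ ‖h‖ := by
      calc ξ h ≤ ‖ξ h‖ := Real.le_norm_self _
        _ ≤ ‖ξ‖ * ‖h‖ := ξ.le_opNorm h
        _ ≤ 1 * ‖h‖ := by gcongr
        _ = ‖h‖ := one_mul _
    linarith

lemma functionalAux {Y E : Type*} [AddCommGroup Y] [Module ℝ Y]
    [NormedAddCommGroup E] [NormedSpace ℝ E] (J : Y →ₗ[ℝ] (E →L[ℝ] ℝ))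
    (ξ : E →L[ℝ] ℝ) (d θ : ℝ) (hd : θ < d)
    (hξ : ∀ y : Y, d ≤ ‖ξ - J y‖) (s : Finset Y) :
    ∃ g : E, ‖g‖ ≤ 1 ∧ (∀ x ∈ s, J x g = 0) ∧ θ < ξ g := by
  classical
  let L : s → (E →ₗ[ℝ] ℝ) := fun x => (J x).toLinearMap
  let p : Submodule ℝ E := ⨅ x : s, LinearMap.ker (L x)
  have hp : ∀ g : E, g ∈ p ↔ ∀ x ∈ s, J x g = 0 := by
    intro g
    simp [p, L, Submodule.mem_iInf]
  let ζ : p →L[ℝ] ℝ := ξ.comp p.subtypeL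
  by_cases hζ : θ < ‖ζ‖
  · obtain ⟨g, hg, hg2⟩ := ζ.exists_lt_apply_of_lt_opNorm hζ
    rw [Real.norm_eq_abs] at hg2
    have hgp := (hp g).1 g.2
    rcases lt_abs.1 hg2 with h3 | h3
    · exact ⟨g, hg.le, hgp, h3⟩
    · refine ⟨-g, by simpa using hg.le, fun x hx => by simp [hgp x hx], ?_⟩
      rw [map_neg]
      exact h3
  · exfalso
    push Not at hζ
    obtain ⟨η, hη, hηn⟩ := exists_extension_norm_eq p ζ
    have hker : (⨅ x : s, LinearMap.ker (L x)) ≤ LinearMap.ker (ξ - η).toLinearMap := by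
      intro g hg
      have := hη ⟨g, hg⟩
      simp only [LinearMap.mem_ker]
      change ξ g - η g = 0
      rw [sub_eq_zero]
      exact this.symm
    have hmem := mem_span_of_iInf_ker_le_ker hker
    have hmem2 : (ξ - η).toLinearMap ∈
        LinearMap.range ((ContinuousLinearMap.coeLM ℝ).comp J) := by
      refine (Submodule.span_le.2 ?_) hmem
      rintro _ ⟨x, rfl⟩
      exact ⟨x, rfl⟩
    obtain ⟨y, hy⟩ := hmem2
    have hy' : J y = ξ - η := by
      ext g
      exact LinearMap.congr_fun hy g
    have := hξ y
    rw [hy', sub_sub_cancel, hηn] at this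
    linarith

lemma functional {Y : Type*} [NormedAddCommGroup Y] [NormedSpace ℝ Y]
    (ξ : StrongDual ℝ (StrongDual ℝ Y)) (d θ : ℝ) (hd : θ < d)
    (hξ : ∀ y : Y, d ≤ ‖ξ - NormedSpace.inclusionInDoubleDual ℝ Y y‖) (s : Finset Y) :
    ∃ g : StrongDual ℝ Y, ‖g‖ ≤ 1 ∧ (∀ x ∈ s, g x = 0) ∧ θ < ξ g :=
  functionalAux (NormedSpace.inclusionInDoubleDual ℝ Y).toLinearMap ξ d θ hd hξ s

/-- James' sequences in a non-reflexive space. -/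
lemma james {Y : Type*} [NormedAddCommGroup Y] [NormedSpace ℝ Y] [CompleteSpace Y]
    (h : ¬ Function.Surjective ⇑(NormedSpace.inclusionInDoubleDual ℝ Y)) :
    ∃ (θ : ℝ) (e : ℕ → Y) (g : ℕ → StrongDual ℝ Y), 0 < θ ∧ (∀ n, ‖e n‖ ≤ 1) ∧
      (∀ n, ‖g n‖ ≤ 1) ∧ (∀ m n, m < n → g n (e m) = 0) ∧ (∀ m n, m ≤ n → θ ≤ g m (e n)) := by
  classical
  let J := NormedSpace.inclusionInDoubleDual ℝ Y
  have hJ : Isometry J := (NormedSpace.inclusionInDoubleDualLi (E := Y) ℝ).isometry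
  have hcl : IsClosed (Set.range J) := hJ.isClosedEmbedding.isClosed_range
  unfold Function.Surjective at h
  push Not at h
  obtain ⟨ξ₀, hξ₀⟩ := h
  obtain ⟨ξ, hξ1, hξ2⟩ : ∃ ξ, ‖ξ‖ ≤ 1 ∧ ξ ∉ Set.range J := by
    have hpos : 0 < ‖ξ₀‖ := by
      by_contra hc
      have h0 : ξ₀ = 0 := by
        apply ContinuousLinearMap.ext
        intro g
        have h1 := ξ₀.le_opNorm g
        have h2 : ‖ξ₀‖ * ‖g‖ ≤ 0 :=
          mul_nonpos_of_nonpos_of_nonneg (not_lt.1 hc) (norm_nonneg g)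
        exact norm_le_zero_iff.1 (h1.trans h2)
      exact hξ₀ 0 (by rw [h0, map_zero])
    refine ⟨‖ξ₀‖⁻¹ • ξ₀, ?_, ?_⟩
    · refine ContinuousLinearMap.opNorm_le_bound _ zero_le_one fun g => ?_
      have h1 := ξ₀.le_opNorm g
      change ‖‖ξ₀‖⁻¹ * ξ₀ g‖ ≤ 1 * ‖g‖
      rw [norm_mul, Real.norm_of_nonneg (inv_nonneg.2 hpos.le), one_mul,
        inv_mul_le_iff₀ hpos]
      exact h1
    · rintro ⟨y, hy⟩
      apply hξ₀ (‖ξ₀‖ • y)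
      change J _ = _
      rw [map_smul, hy, smul_smul, mul_inv_cancel₀ hpos.ne', one_smul]
  obtain ⟨d, hd, hball⟩ := Metric.isOpen_iff.1 hcl.isOpen_compl ξ hξ2
  have hdist : ∀ y : Y, d ≤ ‖ξ - J y‖ := by
    intro y
    by_contra hc
    push Not at hc
    have hmem : J y ∈ Metric.ball ξ d := by
      rw [Metric.mem_ball, dist_comm]
      exact (dist_eq_norm ξ (J y)).trans_lt hc
    exact hball hmem ⟨y, rfl⟩
  obtain ⟨F, hF1, hF2⟩ := exists_seq_of_forall_finset_exists
    (fun q : Y × StrongDual ℝ Y => ‖q.1‖ ≤ 1 ∧ ‖q.2‖ ≤ 1 ∧ d / 2 < ξ q.2 ∧ d / 2 < q.2 q.1)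
    (fun q q' => q'.2 q.1 = 0 ∧ d / 2 < q.2 q'.1) (by
      intro s hs
      obtain ⟨g, hg1, hg2, hg3⟩ := functional ξ d (d / 2) (by linarith) hdist
        (s.image Prod.fst)
      obtain ⟨x, hx1, hx2⟩ := helly ξ hξ1 (d / 2) (insert g (s.image Prod.snd)) (by
        intro g' hg'
        rcases Finset.mem_insert.1 hg' with rfl | hg'
        · exact hg3
        · obtain ⟨q, hq, rfl⟩ := Finset.mem_image.1 hg'
          exact (hs q hq).2.2.1)
      refine ⟨(x, g), ⟨hx1, hg1, hg3, hx2 g (Finset.mem_insert_self _ _)⟩, fun q hq => ⟨?_, ?_⟩⟩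
      · exact hg2 _ (Finset.mem_image_of_mem _ hq)
      · exact hx2 _ (Finset.mem_insert_of_mem (Finset.mem_image_of_mem _ hq)))
  refine ⟨d / 2, fun n => (F n).1, fun n => (F n).2, by linarith, fun n => (hF1 n).1,
    fun n => (hF1 n).2.1, fun m n hmn => (hF2 m n hmn).1, fun m n hmn => ?_⟩
  rcases hmn.lt_or_eq with h | rfl
  · exact (hF2 m n h).2.le
  · exact (hF1 m).2.2.2.le

/-- A map that is bounded at scale one is Lipschitz at large distances. -/
lemma lipLarge {X Y : Type*} [NormedAddCommGroup X] [NormedSpace ℝ X]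
    [NormedAddCommGroup Y] (f : X → Y) (L : ℝ) (hL : 0 ≤ L)
    (hf : ∀ x y, ‖x - y‖ ≤ 1 → ‖f x - f y‖ ≤ L) (x y : X) :
    ‖f x - f y‖ ≤ L * (‖x - y‖ + 1) := by
  have key : ∀ n : ℕ, ∀ x y : X, ‖x - y‖ ≤ n + 1 → ‖f x - f y‖ ≤ L * (n + 1) := by
    intro n
    induction n with
    | zero =>
      intro x y h
      have := hf x y (by simpa using h)
      simpa using this
    | succ n ih =>
      intro x y h
      push_cast at h ⊢
      let z : X := y + ((n + 1 : ℝ) / (n + 2)) • (x - y)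
      have hn : (0 : ℝ) < n + 2 := by positivity
      have h1 : z - y = ((n + 1 : ℝ) / (n + 2)) • (x - y) := by simp [z]
      have h2 : x - z = ((1 : ℝ) / (n + 2)) • (x - y) := by
        have : (1 : ℝ) / (n + 2) = 1 - (n + 1) / (n + 2) := by field_simp; ring
        rw [this, sub_smul, one_smul]
        simp only [z]; abel
      have h3 : ‖z - y‖ ≤ n + 1 := by
        rw [h1, norm_smul, Real.norm_of_nonneg (by positivity), div_mul_eq_mul_div,
          div_le_iff₀ hn]
        gcongr
        linarith
      have h4 : ‖x - z‖ ≤ 1 := by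
        rw [h2, norm_smul, Real.norm_of_nonneg (by positivity), div_mul_eq_mul_div,
          div_le_iff₀ hn]
        linarith
      have h5 := ih z y h3
      have h6 := hf x z h4
      calc ‖f x - f y‖ = ‖(f x - f z) + (f z - f y)‖ := by rw [sub_add_sub_cancel]
        _ ≤ ‖f x - f z‖ + ‖f z - f y‖ := norm_add_le _ _
        _ ≤ L + L * (n + 1) := add_le_add h6 h5
        _ = L * (n + 1 + 1) := by ring
  have h1 := key ⌊‖x - y‖⌋₊ x y (Nat.lt_floor_add_one _).le
  refine h1.trans ?_
  gcongr
  exact Nat.floor_le (norm_nonneg _)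

lemma main {X Y : Type*} [NormedAddCommGroup X] [NormedSpace ℝ X]
    [NormedAddCommGroup Y] [NormedSpace ℝ Y]
    (hβ : ∀ t : ℝ, 0 < t → t ≤ 2 → ∃ δ : ℝ, 0 < δ ∧
      ∀ (x : X) (xs : ℕ → X), ‖x‖ ≤ 1 → (∀ n, ‖xs n‖ ≤ 1) →
        (∀ n m, n ≠ m → t ≤ ‖xs n - xs m‖) →
        ∃ n, ‖x - xs n‖ / 2 ≤ 1 - δ)
    (f : X → Y) (R L θ : ℝ) (hR : 0 < R) (hL : 0 < L) (hθ : 0 < θ)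
    (hlip : ∀ x y, ‖f x - f y‖ ≤ L * (‖x - y‖ + 1))
    (hlift : ∀ x v, ‖v‖ ≤ R → ∃ x', ‖x' - x‖ ≤ 1 ∧ f x' = f x + v)
    (e : ℕ → Y) (g : ℕ → StrongDual ℝ Y) (he : ∀ n, ‖e n‖ ≤ 1) (hg : ∀ n, ‖g n‖ ≤ 1)
    (h0 : ∀ m n, m < n → g n (e m) = 0) (h1 : ∀ m n, m ≤ n → θ ≤ g m (e n)) : False := by
  classical
  -- the lower estimate for differences of successive blocks
  have low : ∀ S T : Finset ℕ, (∀ i ∈ S, ∀ j ∈ T, i < j) →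
      θ * T.card ≤ ‖(∑ i ∈ T, e i) - ∑ i ∈ S, e i‖ := by
    intro S T hST
    rcases T.eq_empty_or_nonempty with rfl | hT
    · simp
    · let p := T.min' hT
      have hS : g p (∑ i ∈ S, e i) = 0 := by
        rw [map_sum]
        exact Finset.sum_eq_zero fun i hi => h0 i p (hST i hi p (T.min'_mem hT))
      have hT' : θ * T.card ≤ g p (∑ i ∈ T, e i) := by
        rw [map_sum, mul_comm, ← nsmul_eq_mul]
        exact Finset.card_nsmul_le_sum _ _ _ fun i hi => h1 p i (T.min'_le i hi)
      calc θ * T.card ≤ g p ((∑ i ∈ T, e i) - ∑ i ∈ S, e i) := by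
            rw [map_sub, hS, sub_zero]; exact hT'
        _ ≤ ‖g p ((∑ i ∈ T, e i) - ∑ i ∈ S, e i)‖ := Real.le_norm_self _
        _ ≤ ‖g p‖ * ‖(∑ i ∈ T, e i) - ∑ i ∈ S, e i‖ := (g p).le_opNorm _
        _ ≤ 1 * ‖(∑ i ∈ T, e i) - ∑ i ∈ S, e i‖ := by gcongr; exact hg p
        _ = _ := one_mul _
  obtain ⟨K, hK⟩ := exists_nat_gt (2 * L / (R * θ))
  have hRθ : 0 < R * θ := mul_pos hR hθ
  have hKL : 2 * L < R * θ * K := by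
    rw [div_lt_iff₀ hRθ] at hK
    linarith
  have hK0 : (0 : ℝ) < K := lt_of_le_of_lt (by positivity) hK
  -- lower estimate in X
  have sep : ∀ (k : ℝ), 1 ≤ k → ∀ (u v : X), R * θ * (K * k) ≤ ‖f u - f v‖ →
      R * θ / (2 * L) * (K * k) ≤ ‖u - v‖ := by
    intro k hk u v huv
    have h2 := huv.trans (hlip u v)
    have h3 : 2 * L ≤ R * θ * (K * k) := by
      have : R * θ * K * 1 ≤ R * θ * K * k := by gcongr
      nlinarith
    rw [div_mul_eq_mul_div, div_le_iff₀ (by positivity)]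
    nlinarith
  let c := R * θ / (2 * L)
  have hc : 0 < c := by positivity
  obtain ⟨δ₀, hδ₀, hδ⟩ := hβ (min c 2) (by positivity) (min_le_right _ _)
  obtain ⟨ρ, hρ1, hρ2, hρ3⟩ : ∃ ρ : ℝ, 0 < ρ ∧ ρ < 1 ∧ 1 - δ₀ ≤ ρ :=
    ⟨max (1 / 2) (1 - δ₀), by positivity, max_lt (by norm_num) (by linarith), le_max_right _ _⟩
  have base : ∀ k : ℕ, ∀ (x : X) (N : ℕ), ∃ (S : Finset ℕ) (x' : X), S.card = k ∧
      (∀ i ∈ S, N ≤ i) ∧ f x' = f x + R • ∑ i ∈ S, e i ∧ ‖x' - x‖ ≤ k := by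
    intro k
    induction k with
    | zero => intro x N; exact ⟨∅, x, by simp⟩
    | succ k ih =>
      intro x N
      obtain ⟨S, x', hS1, hS2, hS3, hS4⟩ := ih x (N + 1)
      obtain ⟨x'', h3, h4⟩ := hlift x' (R • e N) (by
        rw [norm_smul, Real.norm_of_nonneg hR.le]
        nlinarith [he N])
      have hN : N ∉ S := fun h => by have := hS2 N h; omega
      refine ⟨insert N S, x'', by rw [Finset.card_insert_of_notMem hN, hS1], ?_, ?_, ?_⟩
      · intro i hi
        rcases Finset.mem_insert.1 hi with rfl | hi
        · exact le_rfl
        · have := hS2 i hi; omega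
      · rw [Finset.sum_insert hN, h4, hS3, smul_add]; abel
      · calc ‖x'' - x‖ = ‖(x'' - x') + (x' - x)‖ := by rw [sub_add_sub_cancel]
          _ ≤ ‖x'' - x'‖ + ‖x' - x‖ := norm_add_le _ _
          _ ≤ 1 + k := add_le_add h3 hS4
          _ = ((k + 1 : ℕ) : ℝ) := by push_cast; ring
  have step : ∀ j : ℕ, ∀ (x : X) (N : ℕ), ∃ (S : Finset ℕ) (x' : X), S.card = K * 2 ^ j ∧
      (∀ i ∈ S, N ≤ i) ∧ f x' = f x + R • ∑ i ∈ S, e i ∧ ‖x' - x‖ ≤ K * (2 * ρ) ^ j := by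
    intro j
    induction j with
    | zero => intro x N; simpa using base K x N
    | succ j ih =>
      intro x N
      obtain ⟨S, z, hS1, hS2, hS3, hS4⟩ := ih x N
      obtain ⟨F, hF1, hF2⟩ := exists_seq_of_forall_finset_exists
        (fun q : Finset ℕ × X => q.1.card = K * 2 ^ j ∧ (∀ i ∈ q.1, N ≤ i ∧ ∀ l ∈ S, l < i) ∧
          f q.2 = f z + R • ∑ i ∈ q.1, e i ∧ ‖q.2 - z‖ ≤ K * (2 * ρ) ^ j)
        (fun q q' => ∀ i ∈ q.1, ∀ l ∈ q'.1, i < l) (by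
          intro s _
          obtain ⟨T, w, hT1, hT2, hT3, hT4⟩ := ih z
            (N + S.sup id + s.sup (fun q => q.1.sup id) + 1)
          refine ⟨(T, w), ⟨hT1, fun i hi => ⟨?_, fun l hl => ?_⟩, hT3, hT4⟩,
            fun q hq i hi l hl => ?_⟩
          · have := hT2 i hi; omega
          · have h3 := hT2 i hi
            have h4 : l ≤ S.sup id := Finset.le_sup (f := id) hl
            omega
          · have h3 := hT2 l hl
            have h4 : i ≤ q.1.sup id := Finset.le_sup (f := id) hi
            have h5 : q.1.sup id ≤ s.sup (fun q => q.1.sup id) :=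
              Finset.le_sup (f := fun q : Finset ℕ × X => q.1.sup id) hq
            omega)
      let A : ℝ := K * (2 * ρ) ^ j
      have hA : 0 < A := by positivity
      have hA2 : A ≤ K * 2 ^ j := by
        simp only [A]
        gcongr
        linarith
      have hsep : ∀ n m, n < m → c * A ≤ ‖(F n).2 - (F m).2‖ := by
        intro n m hnm
        have h3 : c * (K * 2 ^ j) ≤ ‖(F m).2 - (F n).2‖ := by
          apply sep _ (one_le_pow₀ (by norm_num))
          have h4 := low _ _ (hF2 n m hnm)
          rw [(hF1 m).1] at h4
          push_cast at h4
          rw [(hF1 m).2.2.1, (hF1 n).2.2.1, add_sub_add_left_eq_sub, ← smul_sub, norm_smul,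
            Real.norm_of_nonneg hR.le, mul_assoc]
          gcongr
        rw [norm_sub_rev]
        refine le_trans ?_ h3
        gcongr
      have hscale : ∀ v : X, ‖A⁻¹ • v‖ = A⁻¹ * ‖v‖ := by
        intro v
        rw [norm_smul, Real.norm_of_nonneg (inv_nonneg.2 hA.le)]
      obtain ⟨n, hn⟩ := hδ (A⁻¹ • (x - z)) (fun n => A⁻¹ • ((F n).2 - z))
        (by
          rw [hscale, inv_mul_le_iff₀ hA, mul_one, norm_sub_rev]
          exact hS4)
        (fun n => by
          rw [hscale, inv_mul_le_iff₀ hA, mul_one]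
          exact (hF1 n).2.2.2)
        (fun n m hnm => by
          refine (min_le_left _ _).trans ?_
          rw [← smul_sub, sub_sub_sub_cancel_right, hscale, le_inv_mul_iff₀ hA, mul_comm]
          rcases lt_or_gt_of_ne hnm with h | h
          · exact hsep n m h
          · rw [norm_sub_rev]; exact hsep m n h)
      rw [← smul_sub, sub_sub_sub_cancel_right, hscale] at hn
      have hn2 : ‖(F n).2 - x‖ ≤ A * (2 * ρ) := by
        rw [norm_sub_rev, ← inv_mul_le_iff₀ hA]
        linarith
      have hdisj : Disjoint S (F n).1 := by
        rw [Finset.disjoint_left]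
        intro i hi hi'
        exact lt_irrefl _ (((hF1 n).2.1 i hi').2 i hi)
      refine ⟨S ∪ (F n).1, (F n).2, ?_, ?_, ?_, ?_⟩
      · rw [Finset.card_union_of_disjoint hdisj, hS1, (hF1 n).1]; ring
      · intro i hi
        rcases Finset.mem_union.1 hi with hi | hi
        · exact hS2 i hi
        · exact ((hF1 n).2.1 i hi).1
      · rw [Finset.sum_union hdisj, (hF1 n).2.2.1, hS3, smul_add]; abel
      · rw [pow_succ, ← mul_assoc]; exact hn2
  obtain ⟨j, hj⟩ := exists_pow_lt_of_lt_one hc hρ2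
  obtain ⟨S, x', hS1, -, hS3, hS4⟩ := step j 0 0
  have h3 := low ∅ S (by simp)
  rw [hS1] at h3
  push_cast at h3
  rw [Finset.sum_empty, sub_zero] at h3
  have h4 : c * (K * 2 ^ j) ≤ ‖x' - 0‖ := by
    apply sep _ (one_le_pow₀ (by norm_num))
    rw [hS3, add_sub_cancel_left, norm_smul, Real.norm_of_nonneg hR.le, mul_assoc]
    gcongr
  have h5 : c * (K * 2 ^ j) ≤ ρ ^ j * (K * 2 ^ j) := by
    refine (h4.trans hS4).trans (le_of_eq ?_)
    rw [mul_pow]; ring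
  have h6 : (0 : ℝ) < K * 2 ^ j := by positivity
  have := le_of_mul_le_mul_right h5 h6
  linarith

end UQBeta


/-- If Y is a uniform quotient of a Banach space X with property (β), then Y is
reflexive. -/
theorem uniformQuotient_of_propertyBeta_reflexive
    (X Y : Type*) [NormedAddCommGroup X] [NormedSpace ℝ X] [CompleteSpace X]
    [NormedAddCommGroup Y] [NormedSpace ℝ Y] [CompleteSpace Y]
    (hβ : ∀ t : ℝ, 0 < t → t ≤ 2 → ∃ δ : ℝ, 0 < δ ∧
      ∀ (x : X) (xs : ℕ → X), ‖x‖ ≤ 1 → (∀ n, ‖xs n‖ ≤ 1) →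
        (∀ n m, n ≠ m → t ≤ ‖xs n - xs m‖) →
        ∃ n, ‖x - xs n‖ / 2 ≤ 1 - δ)
    (f : X → Y) (hsurj : Function.Surjective f)
    (ω Ω : ℝ → ℝ) (hωmono : Monotone ω) (hΩmono : Monotone Ω)
    (hωpos : ∀ r : ℝ, 0 < r → 0 < ω r)
    (hΩ0 : Filter.Tendsto Ω (nhdsWithin 0 (Set.Ioi 0)) (nhds 0))
    (hquot : ∀ (x : X) (r : ℝ), 0 < r →
      Metric.closedBall (f x) (ω r) ⊆ f '' Metric.closedBall x r ∧
      f '' Metric.closedBall x r ⊆ Metric.closedBall (f x) (Ω r)) :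
    Function.Surjective ⇑(NormedSpace.inclusionInDoubleDual ℝ Y) := by
  by_contra hne
  obtain ⟨θ, e, g, hθ, he, hg, h0, h1⟩ := UQBeta.james hne
  have hf : ∀ x y : X, ‖x - y‖ ≤ 1 → ‖f x - f y‖ ≤ max (Ω 1) 1 := by
    intro x y hxy
    have := (hquot y 1 one_pos).2 ⟨x, by rwa [Metric.mem_closedBall, dist_eq_norm], rfl⟩
    rw [Metric.mem_closedBall, dist_eq_norm] at this
    exact this.trans (le_max_left _ _)
  have hL : (0 : ℝ) < max (Ω 1) 1 := lt_of_lt_of_le one_pos (le_max_right _ _)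
  refine UQBeta.main hβ f (ω 1) (max (Ω 1) 1) θ (hωpos 1 one_pos) hL hθ
    (UQBeta.lipLarge f _ hL.le hf) ?_ e g he hg h0 h1
  intro x v hv
  obtain ⟨x', hx', hfx⟩ := (hquot x 1 one_pos).1 (show f x + v ∈ _ by
    rw [Metric.mem_closedBall, dist_eq_norm, add_sub_cancel_left]; exact hv)
  rw [Metric.mem_closedBall, dist_eq_norm] at hx'
  exact ⟨x', hx', hfx⟩
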